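/- Fix an integer s ≥ 2 and a real number r ∈ (0, binom(s,2)], and for n ≥ s let P_n(s,r) ⊆ [0,1]^{E(K_n)} be the set of edge-weightings w : E(K_n) → [0,1] such that w(S) ≤ r for every s-element subset S of [n]. Then vol(P_n(s,r)) = (r/binom(s,2) + o(1))^{binom(n,2)}; that is, vol(P_n(s,r))^{1/binom(n,2)} → r/binom(s,2) as n → ∞. -/

import Mathlib

open MeasureTheory Filter Set

noncomputable section

/-- The edge set of the complete graph `K_n`, encoded as ordered pairs `(i,j)` with
`i < j`. -/
def EdgeType (n : ℕ) : Type := {p : Fin n × Fin n // p.1 < p.2}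

instance (n : ℕ) : Fintype (EdgeType n) := Subtype.fintype _
instance (n : ℕ) : DecidableEq (EdgeType n) := Subtype.instDecidableEq

/-- The edges of `K_n` lying inside a vertex subset `S`. -/
def edgesIn {n : ℕ} (S : Finset (Fin n)) : Finset (EdgeType n) :=
  Finset.univ.filter (fun e => e.val.1 ∈ S ∧ e.val.2 ∈ S)

/-- The hereditary property `P_n(s,r)`: edge-weightings `w : E(K_n) → [0,1]` in which
every `s`-set of vertices has weight at most `r`. -/
def weightedProp (n s : ℕ) (r : ℝ) : Set (EdgeType n → ℝ) :=
  {w | (∀ e, w e ∈ Set.Icc (0:ℝ) 1) ∧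
    ∀ S : Finset (Fin n), S.card = s → ∑ e ∈ edgesIn S, w e ≤ r}

/-!
Multiply a weighting by a large constant `k` and take integer parts, so that it becomes a function
`c` of the pairs of vertices. In a random `s`-tuple, replace `c` by a container function `b p` at
one pair of positions `p` after another: fix a bounded number of random tuples and let `b p x y` be
the largest value for which none of these tuples becomes too heavy when `x` and `y` are placed at
`p`. If all but a few tuples are not too heavy so far, then `c ≤ b p` for all but a few pairs, and a
further random tuple is too heavy for `b p` only if it was so for `c` or beats every tuple of the
sample, which is unlikely by symmetry. Since `b p` is determined by the rows of `c` at boundedly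
many vertices, only `2 ^ O(n)` containers arise.

In a container all but a few `s`-tuples have weight at most `k * r`, so some `b p` has mean at most
about `k * r / s.choose 2`. The weightings that `b p / k` bounds at all but a few edges have volume
at most the product of the bounds, up to a small exponential factor, and this product is at most
their mean to the power `n.choose 2` by the inequality of arithmetic and geometric means.
Conversely, the cube of weightings bounded by `r / s.choose 2` lies in `P_n(s,r)`.
-/

open Function
open scoped BigOperators

section UniformSampling

variable {X Y ι : Type*} [Fintype X] [Fintype Y] [Fintype ι]

/-- The proportion of the elements of a finite type that satisfy `P`, i.e. the probability of `P`
under uniform sampling; it is `0` on an empty type. -/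
def freq (P : X → Prop) : ℝ :=
  open Classical in 𝔼 x, if P x then 1 else 0

lemma freq_nonneg (P : X → Prop) : 0 ≤ freq P :=
  Finset.expect_nonneg fun _ _ => by split_ifs <;> norm_num

lemma freq_mono {P Q : X → Prop} (h : ∀ x, P x → Q x) : freq P ≤ freq Q := by
  refine Finset.expect_le_expect fun x _ => ?_
  split_ifs with hP hQ
  · exact le_rfl
  · exact absurd (h x hP) hQ
  · exact zero_le_one
  · exact le_rfl

lemma freq_eq_expect (P : X → Prop) [DecidablePred P] :
    freq P = 𝔼 x, if P x then (1 : ℝ) else 0 := by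
  unfold freq
  congr!

lemma freq_or_le (P Q : X → Prop) : freq (fun x => P x ∨ Q x) ≤ freq P + freq Q := by
  rw [freq, freq, freq, ← Finset.expect_add_distrib]
  refine Finset.expect_le_expect fun x _ => ?_
  by_cases hP : P x <;> by_cases hQ : Q x <;> simp [hP, hQ]

lemma freq_exists_le (P : ι → X → Prop) : freq (fun x => ∃ i, P i x) ≤ ∑ i, freq (P i) := by
  classical
  simp only [freq]
  rw [← Finset.expect_sum_comm]
  refine Finset.expect_le_expect fun x _ => ?_
  split_ifs with h
  · obtain ⟨i, hi⟩ := h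
    simpa [hi] using Finset.single_le_sum (f := fun i => if P i x then (1 : ℝ) else 0)
      (fun _ _ => by split_ifs <;> norm_num) (Finset.mem_univ i)
  · exact Finset.sum_nonneg fun _ _ => by split_ifs <;> norm_num

lemma sum_freq_le_one [Nonempty X] (P : ι → X → Prop)
    (hP : ∀ x i j, P i x → P j x → i = j) : ∑ i, freq (P i) ≤ 1 := by
  simp only [freq]
  rw [← Finset.expect_sum_comm]
  refine Finset.expect_le Finset.univ_nonempty fun x _ => ?_
  rw [Finset.sum_boole, Nat.cast_le_one, Finset.card_le_one]
  simpa only [Finset.mem_filter, Finset.mem_univ, true_and] using fun i hi j hj => hP x i j hi hj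

lemma freq_comp_equiv (e : X ≃ Y) (P : Y → Prop) : freq (fun x => P (e x)) = freq P :=
  Fintype.expect_equiv e _ _ fun _ => rfl

lemma expect_univ_prod (g : X × Y → ℝ) : 𝔼 z, g z = 𝔼 x, 𝔼 y, g (x, y) := by
  rw [← Finset.univ_product_univ, Finset.expect_product]

lemma freq_prod (P : X × Y → Prop) : freq P = 𝔼 x, freq fun y => P (x, y) :=
  expect_univ_prod _

section Resampling

variable [Nonempty X] [DecidableEq ι]

lemma expect_update (i : ι) (g : (ι → X) → ℝ) :
    𝔼 x, 𝔼 v, g (update v i x) = 𝔼 v, g v := by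
  have hinv : Involutive fun z : X × (ι → X) => (z.2 i, update z.2 i z.1) := by
    rintro ⟨x, v⟩
    simp
  calc 𝔼 x, 𝔼 v, g (update v i x)
      = 𝔼 z : X × (ι → X), g (update z.2 i z.1) :=
        (expect_univ_prod fun z : X × (ι → X) => g (update z.2 i z.1)).symm
    _ = 𝔼 z : X × (ι → X), g z.2 :=
        Fintype.expect_bijective _ hinv.bijective _ _ fun _ => rfl
    _ = 𝔼 _x : X, 𝔼 v, g v := expect_univ_prod fun z : X × (ι → X) => g z.2
    _ = 𝔼 v, g v := Fintype.expect_const (ι := X) _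

lemma expect_update_update (i j : ι) (g : (ι → X) → ℝ) :
    𝔼 q : X × X, 𝔼 v, g (update (update v i q.1) j q.2) = 𝔼 v, g v := by
  rw [expect_univ_prod, Finset.expect_comm]
  calc 𝔼 y, 𝔼 x, 𝔼 v, g (update (update v i x) j y)
      = 𝔼 y, 𝔼 v, g (update v j y) :=
        Finset.expect_congr rfl fun y _ => expect_update i fun v => g (update v j y)
    _ = 𝔼 v, g v := expect_update j g

lemma expect_eval (i : ι) (g : X → ℝ) : 𝔼 v : ι → X, g (v i) = 𝔼 x, g x := by
  simp [← expect_update i fun v : ι → X => g (v i)]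

lemma expect_eval_pair {i j : ι} (hij : i ≠ j) (g : X → X → ℝ) :
    𝔼 v : ι → X, g (v i) (v j) = 𝔼 q : X × X, g q.1 q.2 := by
  simp [← expect_update_update i j fun v : ι → X => g (v i) (v j), update_of_ne hij]

end Resampling

/-- By symmetry each coordinate is equally likely to be the unique maximum. -/
lemma freq_forall_lt_le [Nonempty X] [DecidableEq ι] (f : X → ℕ) (i : ι) :
    freq (fun v : ι → X => ∀ j, j ≠ i → f (v j) < f (v i)) ≤ 1 / Fintype.card ι := by
  have : Nonempty ι := ⟨i⟩
  set P : ι → (ι → X) → Prop := fun i v => ∀ j, j ≠ i → f (v j) < f (v i) with hP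
  have symm : ∀ j, freq (P j) = freq (P i) := fun j => by
    rw [← freq_comp_equiv (Equiv.arrowCongr (Equiv.swap i j) (Equiv.refl X)) (P j)]
    refine congrArg freq (funext fun v => propext ?_)
    simp only [hP, Equiv.arrowCongr_apply, Equiv.symm_swap, Equiv.coe_refl, id_eq, comp_apply,
      Equiv.swap_apply_right]
    rw [(Equiv.swap i j).forall_congr_left]
    simp [Equiv.swap_apply_eq_iff]
  have disjoint : ∀ v i j, P i v → P j v → i = j := fun v i j hi hj => by
    by_contra hne
    exact (hi j (Ne.symm hne)).asymm (hj i hne)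
  have h := sum_freq_le_one P disjoint
  simp only [symm, Finset.sum_const, Finset.card_univ, nsmul_eq_mul] at h
  rwa [le_div_iff₀' (by positivity)]

lemma expect_freq_forall_lt_le [Nonempty X] [DecidableEq ι] (f : X → ℕ) :
    𝔼 T : ι → X, freq (fun t => ∀ a, f (T a) < f t) ≤ 1 / (Fintype.card ι + 1) := by
  classical
  calc 𝔼 T : ι → X, freq (fun t => ∀ a, f (T a) < f t)
      = freq fun z : X × (ι → X) => ∀ a, f (z.2 a) < f z.1 := by
        rw [freq_prod]
        exact Finset.expect_comm ..
    _ = freq fun v : Option ι → X => ∀ j, j ≠ none → f (v j) < f (v none) := by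
        rw [← freq_comp_equiv (Equiv.piOptionEquivProd (β := fun _ : Option ι => X))]
        simp [Equiv.piOptionEquivProd, Option.forall]
    _ ≤ 1 / (Fintype.card ι + 1) := by
        simpa using freq_forall_lt_le f (none : Option ι)

/-- What the sampled values `Q y (T a)` leave of a total budget `R` at `y`; it is `0` when one of
them exceeds the budget. -/
def residualBudget (R : ℕ) (Q : Y → X → ℕ) (T : ι → X) (y : Y) : ℕ :=
  R - Finset.univ.sup fun a => Q y (T a)

lemma expect_freq_residualBudget_lt_le [Nonempty X] [Nonempty ι] [DecidableEq ι] (R : ℕ) (c : Y → ℕ)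
    (Q : Y → X → ℕ) :
    𝔼 T : ι → X, freq (fun y => residualBudget R Q T y < c y) ≤
      Fintype.card ι * freq fun z : Y × X => R < c z.1 + Q z.1 z.2 := by
  have exists_excess (T : ι → X) (y : Y) (hy : residualBudget R Q T y < c y) :
      ∃ a, R < c y + Q y (T a) := by
    obtain ⟨a, -, ha⟩ := Finset.exists_mem_eq_sup Finset.univ Finset.univ_nonempty
      fun a => Q y (T a)
    exact ⟨a, by rw [residualBudget, ha] at hy; omega⟩
  calc 𝔼 T : ι → X, freq (fun y => residualBudget R Q T y < c y)
      ≤ 𝔼 T : ι → X, ∑ a, freq fun y => R < c y + Q y (T a) :=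
        Finset.expect_le_expect fun T _ => (freq_mono (exists_excess T)).trans (freq_exists_le _)
    _ = ∑ _a : ι, 𝔼 t, freq fun y => R < c y + Q y t := by
        rw [Finset.expect_sum_comm]
        exact Finset.sum_congr rfl fun a _ => expect_eval a fun t => freq fun y => R < c y + Q y t
    _ = Fintype.card ι * freq fun z : Y × X => R < c z.1 + Q z.1 z.2 := by
        rw [Finset.sum_const, nsmul_eq_mul, Finset.card_univ, freq_prod]
        congr 1
        exact Finset.expect_comm ..

/-- If the residual budget at `y` overshoots at `(y, t)`, then either `c` does so already or `Q y t`
beats every sampled value `Q y (T a)`. -/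
lemma expect_freq_lt_residualBudget_add_le [Nonempty X] [Nonempty Y] [DecidableEq ι] (R : ℕ)
    (c : Y → ℕ) (Q : Y → X → ℕ) :
    𝔼 T : ι → X, freq (fun z : Y × X => R < residualBudget R Q T z.1 + Q z.1 z.2) ≤
      freq (fun z : Y × X => R < c z.1 + Q z.1 z.2) + 1 / (Fintype.card ι + 1) := by
  have exceeds_or_record (T : ι → X) (y : Y) (t : X) (ht : R < residualBudget R Q T y + Q y t) :
      R < c y + Q y t ∨ ∀ a, Q y (T a) < Q y t := by
    refine or_iff_not_imp_right.mpr fun hnot => ?_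
    push Not at hnot
    obtain ⟨a, ha⟩ := hnot
    have : Q y (T a) ≤ Finset.univ.sup fun a => Q y (T a) :=
      Finset.le_sup (f := fun a => Q y (T a)) (Finset.mem_univ a)
    rw [residualBudget] at ht
    omega
  calc 𝔼 T : ι → X, freq (fun z : Y × X => R < residualBudget R Q T z.1 + Q z.1 z.2)
      ≤ 𝔼 T : ι → X, 𝔼 y, (freq (fun t => R < c y + Q y t) +
          freq fun t => ∀ a, Q y (T a) < Q y t) := by
        simp only [freq_prod]
        exact Finset.expect_le_expect fun T _ => Finset.expect_le_expect fun y _ =>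
          (freq_mono (exceeds_or_record T y)).trans (freq_or_le _ _)
    _ = freq (fun z : Y × X => R < c z.1 + Q z.1 z.2) +
          𝔼 y, 𝔼 T : ι → X, freq fun t => ∀ a, Q y (T a) < Q y t := by
        simp only [freq_prod, Finset.expect_add_distrib, Fintype.expect_const]
        congr 1
        exact Finset.expect_comm ..
    _ ≤ freq (fun z : Y × X => R < c z.1 + Q z.1 z.2) + 1 / (Fintype.card ι + 1) := by
        gcongr
        exact Finset.expect_le Finset.univ_nonempty fun y _ => expect_freq_forall_lt_le (Q y)

lemma exists_sample [Nonempty X] [Nonempty Y] [Nonempty ι] (R : ℕ) (c : Y → ℕ) (Q : Y → X → ℕ)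
    {ε : ℝ} (h : freq (fun z : Y × X => R < c z.1 + Q z.1 z.2) ≤ ε) :
    ∃ T : ι → X,
      freq (fun y => residualBudget R Q T y < c y) +
        freq (fun z : Y × X => R < residualBudget R Q T z.1 + Q z.1 z.2) ≤
      (Fintype.card ι + 1) * ε + 1 / (Fintype.card ι + 1) := by
  classical
  have bound := (Finset.expect_add_distrib ..).trans_le <|
    add_le_add (expect_freq_residualBudget_lt_le (ι := ι) R c Q)
      (expect_freq_lt_residualBudget_add_le (ι := ι) R c Q)
  obtain ⟨T, -, hT⟩ := Finset.exists_le_of_expect_le Finset.univ_nonempty bound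
  refine ⟨T, hT.trans ?_⟩
  rw [add_one_mul, add_assoc]
  gcongr

end UniformSampling

section Patterns

variable {V : Type*} {s : ℕ}

/-- The weight of the tuple `v` when the pair of positions `p` is weighted by its own function
`b p`. -/
def tupleWeight (b : EdgeType s → V → V → ℕ) (v : Fin s → V) : ℕ :=
  ∑ p, b p (v p.val.1) (v p.val.2)

/-- The part of `tupleWeight b v` that comes from the pairs of positions other than `p`. -/
def restWeight (p : EdgeType s) (b : EdgeType s → V → V → ℕ) (v : Fin s → V) : ℕ :=
  ∑ e ∈ Finset.univ.erase p, b e (v e.val.1) (v e.val.2)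

lemma tupleWeight_eq_add_restWeight (p : EdgeType s) (b : EdgeType s → V → V → ℕ)
    (v : Fin s → V) : tupleWeight b v = b p (v p.val.1) (v p.val.2) + restWeight p b v :=
  (Finset.add_sum_erase _ _ (Finset.mem_univ p)).symm

lemma restWeight_congr {p : EdgeType s} {b b' : EdgeType s → V → V → ℕ}
    (h : ∀ e ≠ p, b e = b' e) : restWeight p b = restWeight p b' :=
  funext fun v => Finset.sum_congr rfl fun e he => by rw [h e (Finset.ne_of_mem_erase he)]

namespace EdgeType

lemma fst_ne_snd (p : EdgeType s) : p.val.1 ≠ p.val.2 := ne_of_lt p.2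

lemma exists_endpoint_notMem {p e : EdgeType s} (h : e ≠ p) :
    (e.val.1 ≠ p.val.1 ∧ e.val.1 ≠ p.val.2) ∨ (e.val.2 ≠ p.val.1 ∧ e.val.2 ≠ p.val.2) := by
  have hp := p.2
  have he := e.2
  have hne : ¬ (e.val.1 = p.val.1 ∧ e.val.2 = p.val.2) :=
    fun h' => h (Subtype.ext (Prod.ext h'.1 h'.2))
  grind

/-- The tuple `v` with its entries at the endpoints of `p` replaced by the pair `q`. -/
def place (p : EdgeType s) (q : V × V) (v : Fin s → V) : Fin s → V :=
  update (update v p.val.1 q.1) p.val.2 q.2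

variable (p : EdgeType s) (q : V × V) (v : Fin s → V)

@[simp] lemma place_fst : p.place q v p.val.1 = q.1 := by
  simp [place, update_of_ne p.fst_ne_snd]

@[simp] lemma place_snd : p.place q v p.val.2 = q.2 := by
  simp [place]

lemma place_of_ne {l : Fin s} (h : l ≠ p.val.1 ∧ l ≠ p.val.2) : p.place q v l = v l := by
  simp [place, update_of_ne h.1, update_of_ne h.2]

end EdgeType

lemma freq_place [Fintype V] [Nonempty V] (p : EdgeType s) (P : (Fin s → V) → Prop) :
    freq (fun z : (V × V) × (Fin s → V) => P (p.place z.1 z.2)) = freq P := by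
  classical
  rw [freq_prod]
  exact expect_update_update p.val.1 p.val.2 fun v => if P v then 1 else 0

lemma freq_not_injective_le [Fintype V] [Nonempty V] :
    freq (fun v : Fin s → V => ¬ Injective v) ≤ Fintype.card (EdgeType s) / Fintype.card V := by
  classical
  have collision (v : Fin s → V) (hv : ¬ Injective v) :
      ∃ p : EdgeType s, v p.val.1 = v p.val.2 := by
    simp only [Injective, not_forall] at hv
    obtain ⟨i, j, hij, hne⟩ := hv
    rcases lt_or_gt_of_ne hne with h | h
    · exact ⟨⟨(i, j), h⟩, hij⟩
    · exact ⟨⟨(j, i), h⟩, hij.symm⟩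
  have freq_collision (p : EdgeType s) :
      freq (fun v : Fin s → V => v p.val.1 = v p.val.2) = 1 / Fintype.card V := by
    calc freq (fun v : Fin s → V => v p.val.1 = v p.val.2)
        = 𝔼 q : V × V, if q.1 = q.2 then (1 : ℝ) else 0 := by
          rw [freq_eq_expect,
            ← expect_eval_pair p.fst_ne_snd fun x y => if x = y then (1 : ℝ) else 0]
      _ = 1 / Fintype.card V := by
          rw [expect_univ_prod]
          simp [Finset.expect_eq_sum_div_card]
  calc freq (fun v : Fin s → V => ¬ Injective v)
      ≤ ∑ p : EdgeType s, freq (fun v : Fin s → V => v p.val.1 = v p.val.2) :=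
        (freq_mono collision).trans (freq_exists_le _)
    _ = Fintype.card (EdgeType s) / Fintype.card V := by
        simp [freq_collision, div_eq_mul_inv]

end Patterns

section Containers

variable {V ι : Type*} {s : ℕ}

/-- A symmetric weighting `c` of the pairs of `V` by `{0, …, k}` in which every `s`-tuple of
distinct vertices has weight at most `R`. The diagonal of `c` is arbitrary. -/
structure IsBoundedColouring (s k R : ℕ) (c : V → V → ℕ) : Prop where
  le : ∀ x y, c x y ≤ k
  symm : ∀ x y, c x y = c y x
  tupleWeight_le : ∀ v : Fin s → V, Injective v → tupleWeight (fun _ => c) v ≤ R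

/-- The functions `b p`, for the pairs of positions `p ∈ A`, are an `ε`-approximate container for
the weighting `c`: each of them is an upper bound for `c` at all but a few pairs of vertices, and
all but a few `s`-tuples have weight at most `R` after `c` is replaced by `b p` at the positions
`p ∈ A`. -/
structure IsContainer [Fintype V] (R : ℕ) (A : Finset (EdgeType s)) (ε : ℝ)
    (b : EdgeType s → V → V → ℕ) (c : V → V → ℕ) : Prop where
  le : ∀ p ∈ A, ∀ x y, b p x y ≤ R
  freq_lt_le : ∀ p ∈ A, freq (fun q : V × V => b p q.1 q.2 < c q.1 q.2) ≤ ε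
  freq_tupleWeight_le : freq (fun v => R < tupleWeight (A.piecewise b fun _ => c) v) ≤ ε

lemma IsBoundedColouring.isContainer_empty [Fintype V] [Nonempty V] {k R : ℕ} {c : V → V → ℕ}
    (hc : IsBoundedColouring s k R c) (b : EdgeType s → V → V → ℕ) {ε : ℝ}
    (hε : (Fintype.card (EdgeType s) : ℝ) / Fintype.card V ≤ ε) : IsContainer R ∅ ε b c where
  le := by simp
  freq_lt_le := by simp
  freq_tupleWeight_le := by
    refine (freq_mono fun v hv hinj => ?_).trans (freq_not_injective_le.trans hε)
    rw [Finset.piecewise_empty] at hv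
    exact hv.not_ge (hc.tupleWeight_le v hinj)

/-- The weight that remains for the pair `(x, y)` at the positions `p` if none of the sampled tuples
`T a` is to exceed the total weight `R` when `x` and `y` are placed there. -/
def residualWeight [Fintype ι] (R : ℕ) (p : EdgeType s) (b : EdgeType s → V → V → ℕ)
    (T : ι → Fin s → V) (x y : V) : ℕ :=
  residualBudget R (fun q v => restWeight p b (p.place q v)) T (x, y)

/-- Every pair of positions other than `p` has an endpoint outside `p`, where the sampled tuple is
left unchanged. -/
lemma residualWeight_congr [Fintype ι] (R : ℕ) (p : EdgeType s) (A : Finset (EdgeType s))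
    (b : EdgeType s → V → V → ℕ) (T : ι → Fin s → V) {c c' : V → V → ℕ}
    (hc : ∀ x y, c x y = c y x) (hc' : ∀ x y, c' x y = c' y x)
    (h : ∀ a l x, c (T a l) x = c' (T a l) x) :
    residualWeight R p (A.piecewise b fun _ => c) T =
      residualWeight R p (A.piecewise b fun _ => c') T := by
  funext x y
  refine congrArg (R - ·) (Finset.sup_congr rfl fun a _ => Finset.sum_congr rfl fun e he => ?_)
  by_cases heA : e ∈ A
  · simp [heA]
  simp only [Finset.piecewise_eq_of_notMem _ _ _ heA]
  rcases EdgeType.exists_endpoint_notMem (Finset.ne_of_mem_erase he) with hl | hl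
  · rw [p.place_of_ne _ _ hl, h]
  · rw [p.place_of_ne _ _ hl, hc, h, hc']

lemma tupleWeight_piecewise_insert_update (p : EdgeType s) (A : Finset (EdgeType s))
    (b : EdgeType s → V → V → ℕ) (c f : V → V → ℕ) (v : Fin s → V) :
    tupleWeight ((insert p A).piecewise (update b p f) fun _ => c) v =
      f (v p.val.1) (v p.val.2) + restWeight p (A.piecewise b fun _ => c) v := by
  rw [tupleWeight_eq_add_restWeight p, restWeight_congr (b' := A.piecewise b fun _ => c)]
  · simp
  · intro e hne
    by_cases he : e ∈ A <;> simp [he, hne]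

lemma IsContainer.exists_insert [Fintype V] [Nonempty V] [Fintype ι] [Nonempty ι] {R : ℕ}
    {A : Finset (EdgeType s)} {p : EdgeType s} (hp : p ∉ A) {ε δ : ℝ}
    (hδ : (Fintype.card ι + 1) * δ + 1 / (Fintype.card ι + 1) ≤ ε)
    {b : EdgeType s → V → V → ℕ} {c : V → V → ℕ} (hb : IsContainer R A δ b c) :
    ∃ T : ι → Fin s → V, IsContainer R (insert p A) ε
      (update b p (residualWeight R p (A.piecewise b fun _ => c) T)) c := by
  set d : EdgeType s → V → V → ℕ := A.piecewise b fun _ => c with hd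
  have hdp : d p = c := Finset.piecewise_eq_of_notMem _ _ _ hp
  have violation : freq (fun z : (V × V) × (Fin s → V) =>
      R < c z.1.1 z.1.2 + restWeight p d (p.place z.1 z.2)) ≤ δ := by
    refine le_of_eq_of_le ?_ hb.freq_tupleWeight_le
    rw [← freq_place p]
    simp only [← hd, tupleWeight_eq_add_restWeight p d, hdp, EdgeType.place_fst, EdgeType.place_snd]
  obtain ⟨T, hT⟩ := exists_sample (ι := ι) R (fun q : V × V => c q.1 q.2)
    (fun q v => restWeight p d (p.place q v)) violation
  refine ⟨T, ?_, ?_, ?_⟩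
  · intro e he x y
    rcases eq_or_ne e p with rfl | hne
    · simpa only [update_self, residualWeight, residualBudget] using Nat.sub_le _ _
    · simpa only [update_of_ne hne] using hb.le e (Finset.mem_of_mem_insert_of_ne he hne) x y
  · intro e he
    rcases eq_or_ne e p with rfl | hne
    · simp only [update_self]
      exact (le_add_of_nonneg_right (freq_nonneg _)).trans (hT.trans hδ)
    · simp only [update_of_ne hne]
      have hδ_nonneg : 0 ≤ δ := (freq_nonneg _).trans hb.freq_tupleWeight_le
      have hδε : δ ≤ (Fintype.card ι + 1) * δ + 1 / (Fintype.card ι + 1) := by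
        rw [add_one_mul]
        have : 0 ≤ Fintype.card ι * δ + 1 / ((Fintype.card ι : ℝ) + 1) := by positivity
        linarith
      exact (hb.freq_lt_le e (Finset.mem_of_mem_insert_of_ne he hne)).trans (hδε.trans hδ)
  · refine le_trans (le_of_eq ?_) ((le_add_of_nonneg_left (freq_nonneg _)).trans (hT.trans hδ))
    rw [← freq_place p]
    simp only [tupleWeight_piecewise_insert_update, ← hd, EdgeType.place_fst, EdgeType.place_snd,
      residualWeight]

/-- A residual weight depends on `c` only through its rows at the `s * M` vertices occurring in
the sample. -/
lemma exists_residualWeight_family [Fintype V] (k R M : ℕ) (p : EdgeType s)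
    (A : Finset (EdgeType s)) (b : EdgeType s → V → V → ℕ) :
    ∃ F : Finset (V → V → ℕ),
      F.card ≤ (Fintype.card V * (k + 1) ^ Fintype.card V) ^ (s * M) ∧
      ∀ (T : Fin M → Fin s → V) (c : V → V → ℕ), (∀ x y, c x y ≤ k) → (∀ x y, c x y = c y x) →
        residualWeight R p (A.piecewise b fun _ => c) T ∈ F := by
  classical
  let Colouring := {c : V → V → ℕ // (∀ x y, c x y ≤ k) ∧ ∀ x y, c x y = c y x}
  let rows (T : Fin M → Fin s → V) (c : Colouring) : Fin M → Fin s → V → Fin (k + 1) :=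
    fun a l x => ⟨c.1 (T a l) x, Nat.lt_succ_of_le (c.2.1 _ _)⟩
  have factors (T : Fin M → Fin s → V) :
      (fun c : Colouring =>
        residualWeight R p (A.piecewise b fun _ => c.1) T).FactorsThrough (rows T) :=
    fun c c' h => residualWeight_congr R p A b T c.2.2 c'.2.2 fun a l x =>
      congrArg Fin.val (congrFun (congrFun (congrFun h a) l) x)
  choose decode hdecode using fun T => (factorsThrough_iff _).mp (factors T)
  refine ⟨Finset.univ.image fun z : (Fin M → Fin s → V) × (Fin M → Fin s → V → Fin (k + 1)) =>
    decode z.1 z.2, Finset.card_image_le.trans (le_of_eq ?_), fun T c hk hsymm => ?_⟩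
  · simp only [Finset.card_univ, Fintype.card_prod, Fintype.card_fun, Fintype.card_fin]
    rw [← pow_mul, ← pow_mul, ← mul_pow]
  · exact Finset.mem_image.mpr
      ⟨(T, rows T ⟨c, hk, hsymm⟩), Finset.mem_univ _, (congrFun (hdecode T) ⟨c, hk, hsymm⟩).symm⟩

lemma exists_containers_insert [Fintype V] [Nonempty V] {k R M : ℕ} [NeZero M]
    {A : Finset (EdgeType s)} {p : EdgeType s} (hp : p ∉ A) {ε δ : ℝ}
    (hδ : (M + 1) * δ + 1 / (M + 1) ≤ ε) (F : Finset (EdgeType s → V → V → ℕ))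
    (hF : ∀ c, IsBoundedColouring s k R c → ∃ b ∈ F, IsContainer R A δ b c) :
    ∃ F' : Finset (EdgeType s → V → V → ℕ),
      F'.card ≤ F.card * (Fintype.card V * (k + 1) ^ Fintype.card V) ^ (s * M) ∧
      ∀ c, IsBoundedColouring s k R c → ∃ b ∈ F', IsContainer R (insert p A) ε b c := by
  classical
  choose G hGcard hG using exists_residualWeight_family (V := V) k R M p A
  refine ⟨F.biUnion fun b => (G b).image (update b p), ?_, fun c hc => ?_⟩
  · exact Finset.card_biUnion_le_card_mul _ _ _ fun b _ => Finset.card_image_le.trans (hGcard b)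
  · obtain ⟨b, hbF, hb⟩ := hF c hc
    obtain ⟨T, hT⟩ := hb.exists_insert (ι := Fin M) hp (by simpa using hδ)
    exact ⟨_, Finset.mem_biUnion.mpr
      ⟨b, hbF, Finset.mem_image_of_mem _ (hG b T c hc.le hc.symm)⟩, hT⟩

lemma mul_pow_pow_le_two_pow (n k m : ℕ) : (n * (k + 1) ^ n) ^ m ≤ 2 ^ ((k + 1) * m * n) := by
  calc (n * (k + 1) ^ n) ^ m ≤ (2 ^ n * (2 ^ k) ^ n) ^ m := by
        gcongr
        · exact Nat.lt_two_pow_self.le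
        · exact Nat.lt_two_pow_self
    _ = 2 ^ ((k + 1) * m * n) := by ring

theorem exists_containers (s k R : ℕ) (A : Finset (EdgeType s)) {ε : ℝ} (hε : 0 < ε) :
    ∃ K : ℕ, ∀ᶠ n in atTop, ∃ F : Finset (EdgeType s → Fin n → Fin n → ℕ),
      F.card ≤ 2 ^ (K * n) ∧ ∀ c, IsBoundedColouring s k R c → ∃ b ∈ F, IsContainer R A ε b c := by
  induction A using Finset.induction_on generalizing ε with
  | empty =>
    have htendsto : Tendsto (fun n : ℕ => (Fintype.card (EdgeType s) : ℝ) / n) atTop (nhds 0) :=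
      tendsto_const_nhds.div_atTop tendsto_natCast_atTop_atTop
    refine ⟨0, ?_⟩
    filter_upwards [htendsto.eventually_le_const hε, eventually_gt_atTop 0] with n hn hpos
    have : NeZero n := ⟨hpos.ne'⟩
    exact ⟨{0}, by simp, fun c hc => ⟨0, by simp, hc.isContainer_empty 0 (by simpa using hn)⟩⟩
  | insert p A hp ih =>
    obtain ⟨M, hM⟩ := exists_nat_one_div_lt (half_pos hε)
    set δ : ℝ := ε / 2 / (M + 2) with hδ
    have hsum : (((M + 1 : ℕ) : ℝ) + 1) * δ + 1 / (((M + 1 : ℕ) : ℝ) + 1) ≤ ε := by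
      have hfirst : (((M + 1 : ℕ) : ℝ) + 1) * δ = ε / 2 := by
        rw [hδ]; push_cast; field_simp; ring
      have hsecond : 1 / (((M + 1 : ℕ) : ℝ) + 1) ≤ 1 / ((M : ℝ) + 1) := by
        gcongr; linarith
      linarith
    obtain ⟨K, hK⟩ := ih (ε := δ) (by positivity)
    refine ⟨K + (k + 1) * (s * (M + 1)), ?_⟩
    filter_upwards [hK, eventually_gt_atTop 0] with n ⟨F, hcard, hF⟩ hpos
    have : NeZero n := ⟨hpos.ne'⟩
    obtain ⟨F', hcard', hF'⟩ := exists_containers_insert hp hsum F hF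
    refine ⟨F', hcard'.trans ?_, hF'⟩
    rw [Fintype.card_fin, add_mul, pow_add]
    exact Nat.mul_le_mul hcard (mul_pow_pow_le_two_pow _ _ _)

end Containers

section Edges

variable {n : ℕ}

lemma mem_edgesIn {S : Finset (Fin n)} {e : EdgeType n} :
    e ∈ edgesIn S ↔ e.val.1 ∈ S ∧ e.val.2 ∈ S := by
  simp [edgesIn]

@[simp] lemma edgesIn_univ : edgesIn (Finset.univ : Finset (Fin n)) = Finset.univ := by
  simp [edgesIn]

lemma sum_offDiag_eq_sum_edgesIn {M : Type*} [AddCommMonoid M] (g : Fin n → Fin n → M)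
    (S : Finset (Fin n)) :
    ∑ q ∈ S.offDiag, g q.1 q.2 =
      ∑ e ∈ edgesIn S, (g e.val.1 e.val.2 + g e.val.2 e.val.1) := by
  rw [← Finset.sum_filter_add_sum_filter_not _ fun q : Fin n × Fin n => q.1 < q.2,
    Finset.sum_add_distrib]
  congr 1
  · refine (Finset.sum_bij (fun (e : EdgeType n) _ => e.val) ?_ (fun _ _ _ _ => Subtype.ext) ?_
      fun _ _ => rfl).symm
    · intro e he
      have := mem_edgesIn.mp he
      simp [this.1, this.2, EdgeType.fst_ne_snd e, e.2]
    · rintro q hq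
      simp only [Finset.mem_filter, Finset.mem_offDiag] at hq
      exact ⟨⟨q, hq.2⟩, mem_edgesIn.mpr ⟨hq.1.1, hq.1.2.1⟩, rfl⟩
  · refine (Finset.sum_bij (fun (e : EdgeType n) _ => e.val.swap) ?_
      (fun _ _ _ _ h => Subtype.ext (Prod.swap_injective h)) ?_ fun _ _ => rfl).symm
    · intro e he
      have := mem_edgesIn.mp he
      simp [this.1, this.2, (EdgeType.fst_ne_snd e).symm, e.2.le]
    · rintro q hq
      simp only [Finset.mem_filter, Finset.mem_offDiag, not_lt] at hq
      exact ⟨⟨q.swap, lt_of_le_of_ne hq.2 hq.1.2.2.symm⟩, mem_edgesIn.mpr ⟨hq.1.2.1, hq.1.1⟩, rfl⟩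

lemma card_edgesIn (S : Finset (Fin n)) : (edgesIn S).card = S.card.choose 2 := by
  have h := sum_offDiag_eq_sum_edgesIn (fun _ _ => 1) S
  simp only [Finset.sum_const, Finset.offDiag_card, smul_eq_mul, mul_one, one_add_one_eq_two] at h
  rw [Nat.choose_two_right, Nat.mul_sub_one, h, Nat.mul_div_cancel _ two_pos]

lemma EdgeType.card_eq_choose (n : ℕ) : Fintype.card (EdgeType n) = n.choose 2 := by
  rw [← Finset.card_univ, ← edgesIn_univ, card_edgesIn, Finset.card_fin]

lemma sum_edges_le_sum_pairs {g : Fin n → Fin n → ℝ} (hg : ∀ x y, 0 ≤ g x y) :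
    ∑ e : EdgeType n, (g e.val.1 e.val.2 + g e.val.2 e.val.1) ≤
      ∑ q : Fin n × Fin n, g q.1 q.2 := by
  rw [← edgesIn_univ, ← sum_offDiag_eq_sum_edgesIn]
  exact Finset.sum_le_sum_of_subset_of_nonneg (Finset.subset_univ _) fun q _ _ => hg q.1 q.2

lemma expect_edges_le_expect_pairs {g : Fin n → Fin n → ℝ} (hg : ∀ x y, 0 ≤ g x y) :
    𝔼 e : EdgeType n, (g e.val.1 e.val.2 + g e.val.2 e.val.1) / 2 ≤
      (𝔼 q : Fin n × Fin n, g q.1 q.2) * (n ^ 2 / (2 * n.choose 2)) := by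
  calc 𝔼 e : EdgeType n, (g e.val.1 e.val.2 + g e.val.2 e.val.1) / 2
      = (∑ e : EdgeType n, (g e.val.1 e.val.2 + g e.val.2 e.val.1)) / (2 * n.choose 2) := by
        rw [Fintype.expect_eq_sum_div_card, EdgeType.card_eq_choose, ← Finset.sum_div, div_div]
    _ ≤ (∑ q : Fin n × Fin n, g q.1 q.2) / (2 * n.choose 2) := by
        gcongr
        exact sum_edges_le_sum_pairs hg
    _ = (𝔼 q : Fin n × Fin n, g q.1 q.2) * (n ^ 2 / (2 * n.choose 2)) := by
        rw [← Fintype.card_mul_expect, Fintype.card_prod, Fintype.card_fin]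
        push_cast
        ring

lemma tupleWeight_eq_sum_edgesIn {s : ℕ} {c : Fin n → Fin n → ℕ} (hc : ∀ x y, c x y = c y x)
    {v : Fin s → Fin n} (hv : Injective v) :
    tupleWeight (fun _ => c) v = ∑ e ∈ edgesIn (Finset.univ.image v), c e.val.1 e.val.2 := by
  have hpairs : ∑ q ∈ Finset.univ.offDiag, c (v q.1) (v q.2) =
      ∑ q ∈ (Finset.univ.image v).offDiag, c q.1 q.2 := by
    refine Finset.sum_nbij (fun q => (v q.1, v q.2)) ?_ ?_ ?_ fun _ _ => rfl
    · intro q hq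
      simpa [hv.eq_iff] using hq
    · exact (hv.prodMap hv).injOn
    · rintro ⟨x, y⟩ hxy
      simp only [Finset.coe_offDiag, mem_offDiag, Finset.mem_coe, Finset.mem_image,
        Finset.mem_univ, true_and] at hxy
      obtain ⟨⟨i, rfl⟩, ⟨j, rfl⟩, hne⟩ := hxy
      exact ⟨(i, j), by simpa using fun h : i = j => hne (congrArg v h), rfl⟩
  rw [sum_offDiag_eq_sum_edgesIn (fun i j => c (v i) (v j)), sum_offDiag_eq_sum_edgesIn,
    edgesIn_univ] at hpairs
  have hdouble (x y : Fin n) : c x y + c y x = 2 * c x y := by rw [hc y x, two_mul]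
  simp only [hdouble, ← Finset.mul_sum] at hpairs
  exact Nat.eq_of_mul_eq_mul_left two_pos hpairs

/-- The weighting of the vertex pairs by the integer parts of `k * w`; it is `0` on the diagonal. -/
def colouring (k : ℕ) (w : EdgeType n → ℝ) (x y : Fin n) : ℕ :=
  if h : x < y then ⌊k * w ⟨(x, y), h⟩⌋₊ else if h : y < x then ⌊k * w ⟨(y, x), h⟩⌋₊ else 0

lemma colouring_comm (k : ℕ) (w : EdgeType n → ℝ) (x y : Fin n) :
    colouring k w x y = colouring k w y x := by
  rcases lt_trichotomy x y with h | h | h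
  · simp [colouring, h, h.not_gt]
  · rw [h]
  · simp [colouring, h, h.not_gt]

lemma colouring_edge (k : ℕ) (w : EdgeType n → ℝ) (e : EdgeType n) :
    colouring k w e.val.1 e.val.2 = ⌊k * w e⌋₊ :=
  dif_pos e.2

lemma isBoundedColouring_colouring {s : ℕ} {r : ℝ} (k : ℕ) {w : EdgeType n → ℝ}
    (hw : w ∈ weightedProp n s r) : IsBoundedColouring s k ⌊k * r⌋₊ (colouring k w) where
  le := by
    have hfloor (e : EdgeType n) : ⌊k * w e⌋₊ ≤ k :=
      Nat.floor_le_of_le (mul_le_of_le_one_right k.cast_nonneg (hw.1 e).2)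
    intro x y
    unfold colouring
    split_ifs
    exacts [hfloor _, hfloor _, k.zero_le]
  symm := colouring_comm k w
  tupleWeight_le v hv := by
    rw [tupleWeight_eq_sum_edgesIn (colouring_comm k w) hv]
    simp only [colouring_edge]
    refine Nat.le_floor ?_
    push_cast
    calc ∑ e ∈ edgesIn (Finset.univ.image v), (⌊k * w e⌋₊ : ℝ)
        ≤ ∑ e ∈ edgesIn (Finset.univ.image v), k * w e :=
          Finset.sum_le_sum fun e _ => Nat.floor_le (mul_nonneg k.cast_nonneg (hw.1 e).1)
      _ ≤ k * r := by
          rw [← Finset.mul_sum]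
          gcongr
          exact hw.2 _ (by rw [Finset.card_image_of_injective _ hv, Finset.card_fin])

end Edges

section Volume

variable {E : Type*} [Fintype E]

lemma prod_le_expect_pow {z : E → ℝ} (hz : ∀ e, 0 ≤ z e) :
    ∏ e, z e ≤ (𝔼 e, z e) ^ Fintype.card E := by
  rcases isEmpty_or_nonempty E with hE | hE
  · simp
  have hcard : (0 : ℝ) < Fintype.card E := by exact_mod_cast Fintype.card_pos
  have amgm := Real.geom_mean_le_arith_mean Finset.univ (fun _ => 1) z (fun _ _ => zero_le_one)
    (by simpa using hcard) fun e _ => hz e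
  simp only [Real.rpow_one, one_mul, Finset.sum_const, Finset.card_univ, nsmul_eq_mul, mul_one,
    ← Fintype.expect_eq_sum_div_card] at amgm
  rwa [Real.rpow_inv_le_iff_of_pos (Finset.prod_nonneg fun e _ => hz e)
    (Finset.expect_nonneg fun e _ => hz e) hcard, Real.rpow_natCast] at amgm

lemma volume_ne_top_of_mem_Icc {A : Set (E → ℝ)} (hA : ∀ w ∈ A, ∀ e, w e ∈ Icc (0 : ℝ) 1) :
    volume A ≠ ⊤ :=
  ((Metric.isBounded_Icc (0 : E → ℝ) 1).subset fun w hw =>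
    ⟨fun e => (hA w hw e).1, fun e => (hA w hw e).2⟩).measure_lt_top.ne

/-- The weight on `[0, 1]` that is at least `1` up to `β` and equal to `t` beyond `β`, and so
penalises the numbers above the threshold `β`. -/
def thresholdWeight (β t x : ℝ) : ℝ :=
  (Icc 0 β).indicator 1 x + t * (Icc 0 1).indicator 1 x

lemma thresholdWeight_nonneg {β t : ℝ} (ht : 0 ≤ t) (x : ℝ) : 0 ≤ thresholdWeight β t x :=
  add_nonneg (indicator_nonneg (fun _ _ => zero_le_one) _)
    (mul_nonneg ht (indicator_nonneg (fun _ _ => zero_le_one) _))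

lemma le_thresholdWeight {β t x : ℝ} (ht : 0 ≤ t) (hx : x ∈ Icc (0 : ℝ) 1) :
    (if β < x then t else 1) ≤ thresholdWeight β t x := by
  by_cases h : β < x
  · simp [thresholdWeight, h, h.not_ge, hx]
  · simp [thresholdWeight, h, not_lt.mp h, hx.1, hx.2, ht]

lemma integrable_indicator_Icc_one (a b : ℝ) : Integrable ((Icc a b).indicator (1 : ℝ → ℝ)) :=
  (integrable_indicator_iff measurableSet_Icc).mpr (integrableOn_const measure_Icc_lt_top.ne)

lemma integrable_thresholdWeight (β t : ℝ) : Integrable (thresholdWeight β t) :=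
  (integrable_indicator_Icc_one 0 β).add ((integrable_indicator_Icc_one 0 1).const_mul t)

lemma integral_thresholdWeight {β : ℝ} (hβ : 0 ≤ β) (t : ℝ) :
    ∫ x, thresholdWeight β t x = β + t := by
  unfold thresholdWeight
  rw [integral_add (integrable_indicator_Icc_one 0 β)
      ((integrable_indicator_Icc_one 0 1).const_mul t), integral_const_mul,
    integral_indicator_one measurableSet_Icc, integral_indicator_one measurableSet_Icc]
  simp [hβ]

lemma volume_real_card_lt_le {β : E → ℝ} (hβ : ∀ e, 0 ≤ β e) {t : ℝ} (ht : 0 < t) (ht1 : t ≤ 1)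
    (D : ℝ) :
    volume.real {w : E → ℝ | (∀ e, w e ∈ Icc (0 : ℝ) 1) ∧
      ((Finset.univ.filter fun e => β e < w e).card : ℝ) ≤ D} ≤ t ^ (-D) * ∏ e, (β e + t) := by
  have hprod : Integrable fun w : E → ℝ => ∏ e, thresholdWeight (β e) t (w e) :=
    Integrable.fintype_prod fun e => integrable_thresholdWeight (β e) t
  have hsubset : {w : E → ℝ | (∀ e, w e ∈ Icc (0 : ℝ) 1) ∧
      ((Finset.univ.filter fun e => β e < w e).card : ℝ) ≤ D} ⊆
      {w | t ^ D ≤ ∏ e, thresholdWeight (β e) t (w e)} := by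
    rintro w ⟨hw, hD⟩
    calc t ^ D ≤ t ^ (Finset.univ.filter fun e => β e < w e).card := by
          rw [← Real.rpow_natCast]
          exact Real.rpow_le_rpow_of_exponent_ge ht ht1 hD
      _ = ∏ e, if β e < w e then t else 1 := by
          rw [Finset.prod_ite, Finset.prod_const, Finset.prod_const_one, mul_one]
      _ ≤ ∏ e, thresholdWeight (β e) t (w e) :=
          Finset.prod_le_prod (fun e _ => by split_ifs <;> positivity)
            fun e _ => le_thresholdWeight ht.le (hw e)
  have markov := mul_meas_ge_le_integral_of_nonneg
    (ae_of_all _ fun w => Finset.prod_nonneg fun e _ => thresholdWeight_nonneg ht.le (w e))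
    hprod (t ^ D)
  rw [integral_fintype_prod_volume_eq_prod,
    Finset.prod_congr rfl fun e _ => integral_thresholdWeight (hβ e) t] at markov
  rw [Real.rpow_neg ht.le, inv_mul_eq_div, le_div_iff₀' (by positivity)]
  refine le_trans ?_ markov
  gcongr
  exact (hprod.measure_ge_lt_top (by positivity)).ne

end Volume

section ContainerVolume

variable {V : Type*} {n s : ℕ}

lemma IsContainer.exists_expect_le [Fintype V] [Nonempty V] [Nonempty (EdgeType s)] {R : ℕ}
    {ε : ℝ} {b : EdgeType s → V → V → ℕ} {c : V → V → ℕ}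
    (hb : IsContainer R Finset.univ ε b c) :
    ∃ p, 𝔼 q : V × V, (b p q.1 q.2 : ℝ) ≤ R / Fintype.card (EdgeType s) + R * ε := by
  set C := Fintype.card (EdgeType s)
  have hCpos : (0 : ℝ) < C := by exact_mod_cast Fintype.card_pos
  have tupleWeight_le (v : Fin s → V) :
      (tupleWeight b v : ℝ) ≤ R + C * R * if R < tupleWeight b v then 1 else 0 := by
    split_ifs with h
    · have : tupleWeight b v ≤ C * R :=
        (Finset.sum_le_card_nsmul _ _ R fun p hp => hb.le p hp _ _).trans_eq (by simp [C])
      have : (tupleWeight b v : ℝ) ≤ C * R := by exact_mod_cast this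
      linarith [R.cast_nonneg (α := ℝ)]
    · simpa using h
  have expect_tupleWeight : 𝔼 v, (tupleWeight b v : ℝ) = ∑ p, 𝔼 q : V × V, (b p q.1 q.2 : ℝ) := by
    simp only [tupleWeight, Nat.cast_sum]
    rw [Finset.expect_sum_comm]
    exact Finset.sum_congr rfl fun p _ => expect_eval_pair p.fst_ne_snd fun x y => (b p x y : ℝ)
  have hsum : ∑ p, 𝔼 q : V × V, (b p q.1 q.2 : ℝ) ≤ ∑ _p : EdgeType s, (R / C + R * ε) := by
    calc ∑ p, 𝔼 q : V × V, (b p q.1 q.2 : ℝ)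
        ≤ 𝔼 v, (R + C * R * if R < tupleWeight b v then (1 : ℝ) else 0) := by
          rw [← expect_tupleWeight]
          exact Finset.expect_le_expect fun v _ => tupleWeight_le v
      _ = R + C * R * freq fun v => R < tupleWeight b v := by
          rw [Finset.expect_add_distrib, Fintype.expect_const, ← Finset.mul_expect, freq_eq_expect]
      _ ≤ R + C * R * ε := by
          gcongr
          simpa using hb.freq_tupleWeight_le
      _ = ∑ _p : EdgeType s, (R / C + R * ε) := by
          rw [Finset.sum_const, Finset.card_univ, nsmul_eq_mul, mul_add,
            mul_div_cancel₀ _ hCpos.ne', mul_assoc]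
  obtain ⟨p, -, hp⟩ := Finset.exists_le_of_sum_le Finset.univ_nonempty hsum
  exact ⟨p, hp⟩

lemma card_lt_le_of_freq_lt_le {k : ℕ} (hk : 0 < k) (b : Fin n → Fin n → ℕ) {ε : ℝ}
    {w : EdgeType n → ℝ}
    (hw : freq (fun q : Fin n × Fin n => b q.1 q.2 < colouring k w q.1 q.2) ≤ ε) :
    ((Finset.univ.filter fun e : EdgeType n =>
      ((b e.val.1 e.val.2 + b e.val.2 e.val.1) / 2 + 1 : ℝ) / k < w e).card : ℝ) ≤ ε * n ^ 2 := by
  set g : Fin n → Fin n → ℝ := fun x y => if b x y < colouring k w x y then 1 else 0 with hg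
  have hgnonneg (x y : Fin n) : 0 ≤ g x y := by simp only [hg]; split_ifs <;> norm_num
  have one_le (e : EdgeType n)
      (he : ((b e.val.1 e.val.2 + b e.val.2 e.val.1) / 2 + 1 : ℝ) / k < w e) :
      1 ≤ g e.val.1 e.val.2 + g e.val.2 e.val.1 := by
    have hlt : (b e.val.1 e.val.2 + b e.val.2 e.val.1 : ℝ) / 2 < colouring k w e.val.1 e.val.2 := by
      rw [div_lt_iff₀' (by exact_mod_cast hk)] at he
      rw [colouring_edge]
      linarith [Nat.lt_floor_add_one (k * w e)]
    rcases lt_or_ge (b e.val.1 e.val.2) (colouring k w e.val.1 e.val.2) with h | h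
    · simpa [hg, h] using hgnonneg e.val.2 e.val.1
    · have h' : b e.val.2 e.val.1 < colouring k w e.val.1 e.val.2 := by
        have : (colouring k w e.val.1 e.val.2 : ℝ) ≤ b e.val.1 e.val.2 := by exact_mod_cast h
        exact_mod_cast (by linarith :
          (b e.val.2 e.val.1 : ℝ) < colouring k w e.val.1 e.val.2)
      rw [colouring_comm] at h'
      simpa [hg, h'] using hgnonneg e.val.1 e.val.2
  calc ((Finset.univ.filter fun e : EdgeType n =>
        ((b e.val.1 e.val.2 + b e.val.2 e.val.1) / 2 + 1 : ℝ) / k < w e).card : ℝ)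
      ≤ ∑ e : EdgeType n, (g e.val.1 e.val.2 + g e.val.2 e.val.1) := by
        rw [← Finset.sum_boole]
        refine Finset.sum_le_sum fun e _ => ?_
        split_ifs with he
        · exact one_le e he
        · exact add_nonneg (hgnonneg _ _) (hgnonneg _ _)
    _ ≤ ∑ q : Fin n × Fin n, g q.1 q.2 := sum_edges_le_sum_pairs hgnonneg
    _ = n ^ 2 * freq fun q : Fin n × Fin n => b q.1 q.2 < colouring k w q.1 q.2 := by
        rw [freq_eq_expect, ← Fintype.card_mul_expect]
        simp [hg, sq]
    _ ≤ ε * n ^ 2 := by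
        rw [mul_comm]
        gcongr

lemma volume_real_freq_lt_le {k : ℕ} (hk : 0 < k) (b : Fin n → Fin n → ℕ) (ε : ℝ) :
    volume.real {w : EdgeType n → ℝ | (∀ e, w e ∈ Icc (0 : ℝ) 1) ∧
      freq (fun q : Fin n × Fin n => b q.1 q.2 < colouring k w q.1 q.2) ≤ ε} ≤
    k ^ (ε * n ^ 2) *
      ((𝔼 q : Fin n × Fin n, (b q.1 q.2 : ℝ)) / k * (n ^ 2 / (2 * n.choose 2)) + 2 / k) ^
        n.choose 2 := by
  have hk1 : (1 : ℝ) ≤ k := by exact_mod_cast hk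
  set β : EdgeType n → ℝ := fun e => ((b e.val.1 e.val.2 + b e.val.2 e.val.1) / 2 + 1) / k with hβ
  have hβnonneg (e : EdgeType n) : 0 ≤ β e := by positivity
  have mean_le : 𝔼 e, (β e + (k : ℝ)⁻¹) ≤
      (𝔼 q : Fin n × Fin n, (b q.1 q.2 : ℝ)) / k * (n ^ 2 / (2 * n.choose 2)) + 2 / k := by
    have hsplit (e : EdgeType n) : β e + (k : ℝ)⁻¹ =
        ((b e.val.1 e.val.2 + b e.val.2 e.val.1) / 2) / k + 2 / k := by
      simp only [hβ]
      ring
    simp only [hsplit]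
    rw [Finset.expect_add_distrib, ← Finset.expect_div, div_mul_eq_mul_div]
    gcongr
    · exact expect_edges_le_expect_pairs (g := fun x y => (b x y : ℝ))
        fun x y => (b x y).cast_nonneg
    · rcases isEmpty_or_nonempty (EdgeType n)
      · rw [Finset.univ_eq_empty, Finset.expect_empty]
        positivity
      · rw [Fintype.expect_const]
  calc volume.real {w : EdgeType n → ℝ | (∀ e, w e ∈ Icc (0 : ℝ) 1) ∧
        freq (fun q : Fin n × Fin n => b q.1 q.2 < colouring k w q.1 q.2) ≤ ε}
      ≤ volume.real {w : EdgeType n → ℝ | (∀ e, w e ∈ Icc (0 : ℝ) 1) ∧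
          ((Finset.univ.filter fun e => β e < w e).card : ℝ) ≤ ε * n ^ 2} :=
        measureReal_mono (fun w hw => ⟨hw.1, card_lt_le_of_freq_lt_le hk b hw.2⟩)
          (volume_ne_top_of_mem_Icc fun _ hw => hw.1)
    _ ≤ ((k : ℝ)⁻¹) ^ (-(ε * n ^ 2)) * ∏ e, (β e + (k : ℝ)⁻¹) :=
        volume_real_card_lt_le hβnonneg (by positivity) (inv_le_one_of_one_le₀ hk1) _
    _ ≤ k ^ (ε * n ^ 2) * (𝔼 e, (β e + (k : ℝ)⁻¹)) ^ n.choose 2 := by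
        rw [Real.inv_rpow k.cast_nonneg, ← Real.rpow_neg k.cast_nonneg, neg_neg,
          ← EdgeType.card_eq_choose]
        gcongr
        exact prod_le_expect_pow fun e => add_nonneg (hβnonneg e) (by positivity)
    _ ≤ _ := by
        gcongr

lemma volume_real_isContainer_le [NeZero n] [Nonempty (EdgeType s)] {k R : ℕ} (hk : 0 < k) {ε : ℝ}
    (hε : 0 ≤ ε) (b : EdgeType s → Fin n → Fin n → ℕ) :
    volume.real {w : EdgeType n → ℝ | (∀ e, w e ∈ Icc (0 : ℝ) 1) ∧
      IsContainer R Finset.univ ε b (colouring k w)} ≤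
    k ^ (ε * n ^ 2) *
      ((R / s.choose 2 + R * ε) / k * (n ^ 2 / (2 * n.choose 2)) + 2 / k) ^ n.choose 2 := by
  set A := {w : EdgeType n → ℝ | (∀ e, w e ∈ Icc (0 : ℝ) 1) ∧
    IsContainer R Finset.univ ε b (colouring k w)}
  rcases A.eq_empty_or_nonempty with hA | ⟨w₀, -, hw₀⟩
  · rw [hA, measureReal_empty]
    positivity
  obtain ⟨p, hp⟩ := hw₀.exists_expect_le
  rw [EdgeType.card_eq_choose] at hp
  calc volume.real A
      ≤ volume.real {w : EdgeType n → ℝ | (∀ e, w e ∈ Icc (0 : ℝ) 1) ∧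
          freq (fun q : Fin n × Fin n => b p q.1 q.2 < colouring k w q.1 q.2) ≤ ε} :=
        measureReal_mono (fun w hw => ⟨hw.1, hw.2.freq_lt_le p (Finset.mem_univ p)⟩)
          (volume_ne_top_of_mem_Icc fun _ hw => hw.1)
    _ ≤ _ := volume_real_freq_lt_le hk (b p) ε
    _ ≤ _ := by
        gcongr

lemma exists_volume_real_weightedProp_le [Nonempty (EdgeType s)] {r : ℝ} (hr : 0 ≤ r) {k : ℕ}
    (hk : 0 < k) {ε : ℝ} (hε : 0 < ε) :
    ∃ K : ℕ, ∀ᶠ n in atTop, volume.real (weightedProp n s r) ≤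
      2 ^ (K * n) * (k ^ (ε * n ^ 2) *
        ((r / s.choose 2 + r * ε) * (n ^ 2 / (2 * n.choose 2)) + 2 / k) ^ n.choose 2) := by
  set R : ℕ := ⌊k * r⌋₊
  have hRr : (R : ℝ) / k ≤ r :=
    (div_le_iff₀' (by positivity)).mpr (Nat.floor_le (by positivity))
  obtain ⟨K, hK⟩ := exists_containers s k R Finset.univ hε
  refine ⟨K, ?_⟩
  filter_upwards [hK, eventually_gt_atTop 0] with n ⟨F, hcard, hF⟩ hpos
  have : NeZero n := ⟨hpos.ne'⟩
  set covered : (EdgeType s → Fin n → Fin n → ℕ) → Set (EdgeType n → ℝ) := fun b =>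
    {w | (∀ e, w e ∈ Icc (0 : ℝ) 1) ∧ IsContainer R Finset.univ ε b (colouring k w)}
  have hcover : weightedProp n s r ⊆ ⋃ b ∈ F, covered b := fun w hw => by
    obtain ⟨b, hbF, hb⟩ := hF _ (isBoundedColouring_colouring k hw)
    exact mem_biUnion hbF ⟨hw.1, hb⟩
  calc volume.real (weightedProp n s r)
      ≤ volume.real (⋃ b ∈ F, covered b) :=
        measureReal_mono hcover (volume_ne_top_of_mem_Icc fun w hw => by
          obtain ⟨b, -, hwb⟩ := mem_iUnion₂.mp hw
          exact hwb.1)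
    _ ≤ ∑ b ∈ F, volume.real (covered b) := measureReal_biUnion_finset_le _ _
    _ ≤ F.card • (k ^ (ε * n ^ 2) *
          ((R / s.choose 2 + R * ε) / k * (n ^ 2 / (2 * n.choose 2)) + 2 / k) ^ n.choose 2) :=
        Finset.sum_le_card_nsmul _ _ _ fun b _ => volume_real_isContainer_le hk hε.le b
    _ ≤ _ := by
        rw [nsmul_eq_mul, add_div, div_right_comm, mul_div_right_comm]
        gcongr
        exact_mod_cast hcard

end ContainerVolume

section Asymptotics

lemma tendsto_sq_div_two_mul_choose_two :
    Tendsto (fun n : ℕ => (n : ℝ) ^ 2 / (2 * n.choose 2)) atTop (nhds 1) := by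
  have hne : ∀ᶠ n : ℕ in atTop, (n.choose 2 : ℝ) ≠ 0 := by
    filter_upwards [eventually_ge_atTop 2] with n hn
    exact_mod_cast (Nat.choose_pos hn).ne'
  refine ((Asymptotics.isEquivalent_iff_tendsto_one hne).mp (isEquivalent_choose 2).symm).congr
    fun n => ?_
  simp [Nat.factorial, div_div]

lemma tendsto_div_choose_two :
    Tendsto (fun n : ℕ => (n : ℝ) / n.choose 2) atTop (nhds 0) := by
  have h : Tendsto (fun n : ℕ => (n : ℝ) ^ 2 / (2 * n.choose 2) * (2 / n)) atTop (nhds (1 * 0)) :=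
    tendsto_sq_div_two_mul_choose_two.mul
      (tendsto_const_nhds.div_atTop tendsto_natCast_atTop_atTop)
  rw [one_mul] at h
  refine h.congr' ?_
  filter_upwards [eventually_gt_atTop 0] with n hn
  field_simp

lemma tendsto_rpow_inv_choose_two {κ a c : ℝ} (hκ : 0 < κ) (ha : 0 ≤ a) (hc : 0 ≤ c) (K : ℕ)
    (ε : ℝ) :
    Tendsto (fun n : ℕ => (2 ^ (K * n) * (κ ^ (ε * n ^ 2) *
        (a * (n ^ 2 / (2 * n.choose 2)) + c) ^ n.choose 2)) ^ (n.choose 2 : ℝ)⁻¹)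
      atTop (nhds (κ ^ (2 * ε) * (a + c))) := by
  have hlim : Tendsto (fun n : ℕ => (2 : ℝ) ^ (K * ((n : ℝ) / n.choose 2)) *
      (κ ^ (2 * ε * ((n : ℝ) ^ 2 / (2 * n.choose 2))) *
        (a * ((n : ℝ) ^ 2 / (2 * n.choose 2)) + c)))
      atTop (nhds ((2 : ℝ) ^ (K * (0 : ℝ)) * (κ ^ (2 * ε * 1) * (a * 1 + c)))) :=
    (tendsto_const_nhds.rpow (tendsto_div_choose_two.const_mul _) (Or.inl two_ne_zero)).mul
      ((tendsto_const_nhds.rpow (tendsto_sq_div_two_mul_choose_two.const_mul _)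
        (Or.inl hκ.ne')).mul ((tendsto_sq_div_two_mul_choose_two.const_mul a).add_const c))
  simp only [mul_zero, Real.rpow_zero, one_mul, mul_one] at hlim
  refine hlim.congr' ?_
  filter_upwards [eventually_ge_atTop 2] with n hn
  rw [Real.mul_rpow (by positivity) (by positivity), Real.mul_rpow (by positivity) (by positivity),
    Real.pow_rpow_inv_natCast (by positivity) (Nat.choose_pos hn).ne',
    ← Real.rpow_natCast 2 (K * n), ← Real.rpow_mul zero_le_two, ← Real.rpow_mul hκ.le]
  congr 2
  · push_cast
    ring_nf
  · congr 1
    field_simp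

lemma exists_rpow_mul_add_lt {ρ u : ℝ} (hu : ρ < u) (r : ℝ) :
    ∃ k : ℕ, 0 < k ∧ ∃ ε : ℝ, 0 < ε ∧ (k : ℝ) ^ (2 * ε) * (ρ + r * ε + 2 / k) < u := by
  have hk : Tendsto (fun k : ℕ => ρ + 2 / (k : ℝ)) atTop (nhds (ρ + 0)) :=
    (tendsto_const_nhds.div_atTop tendsto_natCast_atTop_atTop).const_add ρ
  rw [add_zero] at hk
  obtain ⟨k, hku, hkpos⟩ := ((hk.eventually_lt_const hu).and (eventually_gt_atTop 0)).exists
  have hcont : Continuous fun ε : ℝ => (k : ℝ) ^ (2 * ε) * (ρ + r * ε + 2 / k) :=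
    (continuous_const.rpow (by fun_prop) fun _ => Or.inl (by positivity)).mul (by fun_prop)
  have hev : ∀ᶠ ε in nhds (0 : ℝ), (k : ℝ) ^ (2 * ε) * (ρ + r * ε + 2 / k) < u :=
    hcont.continuousAt.eventually_lt_const (by simpa using hku)
  obtain ⟨ε, hε, hεpos⟩ := ((hev.filter_mono nhdsWithin_le_nhds).and
    (self_mem_nhdsWithin (s := Ioi 0))).exists
  exact ⟨k, hkpos, ε, hεpos, hε⟩

variable {s : ℕ} {r : ℝ}

lemma eventually_volume_weightedProp_rpow_lt (hs : 2 ≤ s) (hr : 0 ≤ r) {u : ℝ}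
    (hu : r / s.choose 2 < u) :
    ∀ᶠ n : ℕ in atTop, (volume.real (weightedProp n s r)) ^ (n.choose 2 : ℝ)⁻¹ < u := by
  have : Nonempty (EdgeType s) :=
    Fintype.card_pos_iff.mp ((EdgeType.card_eq_choose s).symm ▸ Nat.choose_pos hs)
  obtain ⟨k, hk, ε, hε, hlt⟩ := exists_rpow_mul_add_lt hu r
  obtain ⟨K, hK⟩ := exists_volume_real_weightedProp_le (s := s) hr hk hε
  have hlim := tendsto_rpow_inv_choose_two (a := r / s.choose 2 + r * ε) (c := 2 / k)
    (Nat.cast_pos.mpr hk) (by positivity) (by positivity) K ε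
  filter_upwards [hK, hlim.eventually_lt_const hlt] with n hn hroot
  exact (Real.rpow_le_rpow measureReal_nonneg hn (by positivity)).trans_lt hroot

lemma pow_le_volume_weightedProp (hr : r ∈ Ioc (0 : ℝ) (s.choose 2)) (n : ℕ) :
    (r / s.choose 2) ^ n.choose 2 ≤ volume.real (weightedProp n s r) := by
  have hC : (0 : ℝ) < s.choose 2 := hr.1.trans_le hr.2
  have hsubset : univ.pi (fun _ : EdgeType n => Icc 0 (r / s.choose 2)) ⊆ weightedProp n s r := by
    intro w hw
    refine ⟨fun e => ⟨(hw e trivial).1, (hw e trivial).2.trans ((div_le_one hC).mpr hr.2)⟩,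
      fun S hS => ?_⟩
    calc ∑ e ∈ edgesIn S, w e ≤ (edgesIn S).card • (r / s.choose 2) :=
          Finset.sum_le_card_nsmul _ _ _ fun e _ => (hw e trivial).2
      _ = r := by rw [card_edgesIn, hS, nsmul_eq_mul, mul_div_cancel₀ _ hC.ne']
  calc (r / s.choose 2) ^ n.choose 2
      = volume.real (univ.pi fun _ : EdgeType n => Icc 0 (r / (s.choose 2 : ℝ))) := by
        rw [measureReal_def, volume_pi_pi]
        simp [EdgeType.card_eq_choose, (div_pos hr.1 hC).le]
    _ ≤ volume.real (weightedProp n s r) :=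
        measureReal_mono hsubset (volume_ne_top_of_mem_Icc fun _ hw => hw.1)

lemma le_volume_weightedProp_rpow (hr : r ∈ Ioc (0 : ℝ) (s.choose 2)) {n : ℕ} (hn : 2 ≤ n) :
    r / s.choose 2 ≤ (volume.real (weightedProp n s r)) ^ (n.choose 2 : ℝ)⁻¹ := by
  have hρ : 0 ≤ r / s.choose 2 := div_nonneg hr.1.le (Nat.cast_nonneg _)
  rw [← Real.pow_rpow_inv_natCast hρ (Nat.choose_pos hn).ne']
  exact Real.rpow_le_rpow (by positivity) (pow_le_volume_weightedProp hr n) (by positivity)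

end Asymptotics

/-- **Corollary (volume of the weighted-graph property).**
For fixed `s ≥ 2` and `r ∈ (0, C(s,2)]`,
`vol(P_n(s,r)) = (r/C(s,2) + o(1))^{C(n,2)}`, i.e.
`vol(P_n(s,r))^{1/C(n,2)} → r/C(s,2)` as `n → ∞`. -/
theorem counting_weighted_graphs
    (s : ℕ) (hs : 2 ≤ s) (r : ℝ) (hr : r ∈ Set.Ioc (0:ℝ) (s.choose 2 : ℝ)) :
    Tendsto (fun n : ℕ =>
      ((volume (weightedProp n s r)).toReal) ^ ((n.choose 2 : ℝ)⁻¹))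
      atTop (nhds (r / (s.choose 2 : ℝ))) := by
  refine tendsto_order.mpr ⟨fun l hl => ?_, fun u hu => ?_⟩
  · filter_upwards [eventually_ge_atTop 2] with n hn
    exact hl.trans_le (le_volume_weightedProp_rpow hr hn)
  · exact eventually_volume_weightedProp_rpow_lt hs hr.1.le hu

end
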